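/- Formal De Rham Lemma (Koszul exactness): let v = Σ_{i=1}^n ∂ᵢ(f)·eᵢ ∈ R^n, where e₁,…,eₙ is the standard basis of R^n, and for 0 ≤ p ≤ n−1 consider the R-linear map on exterior powers ⋀^p_R(R^n) → ⋀^{p+1}_R(R^n), ω ↦ v ∧ ω. Then the sequence 0 → R = ⋀^0_R(R^n) → ⋀^1_R(R^n) → ⋯ → ⋀^n_R(R^n) given by these maps is exact: the map ⋀^0 → ⋀^1 (i.e. g ↦ g·v) is injective, and for 1 ≤ p ≤ n−1 the kernel of v ∧ − : ⋀^p_R(R^n) → ⋀^{p+1}_R(R^n) equals the image of v ∧ − : ⋀^{p−1}_R(R^n) → ⋀^p_R(R^n). -/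

import Mathlib

noncomputable section

/-- The formal partial derivative `∂ᵢ` on `ℂ[[x₁,…,xₙ]]`, determined by
`coeff α (∂ᵢ g) = (α i + 1) • coeff (α + eᵢ) g`. -/
def pd {σ : Type*} (i : σ) (g : MvPowerSeries σ ℂ) : MvPowerSeries σ ℂ :=
  fun α => ((α i : ℂ) + 1) * MvPowerSeries.coeff (α + Finsupp.single i 1) g

lemma coeff_pd {σ : Type*} (i : σ) (g : MvPowerSeries σ ℂ) (α : σ →₀ ℕ) :
    MvPowerSeries.coeff α (pd i g) =
      ((α i : ℂ) + 1) * MvPowerSeries.coeff (α + Finsupp.single i 1) g := rfl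

/-- The Jacobian ideal `J(f) = ⟨∂₁f,…,∂ₙf⟩` of `f`. -/
def Jf (n : ℕ) (f : MvPowerSeries (Fin n) ℂ) : Ideal (MvPowerSeries (Fin n) ℂ) :=
  Ideal.span (Set.range fun i : Fin n => pd i f)

/-- The maximal ideal `⟨x₁,…,xₙ⟩` of `ℂ[[x₁,…,xₙ]]`. -/
def mx (n : ℕ) : Ideal (MvPowerSeries (Fin n) ℂ) :=
  Ideal.span (Set.range (MvPowerSeries.X : Fin n → MvPowerSeries (Fin n) ℂ))

/-- The Koszul map `v ∧ − : ⋀^p_R(Rⁿ) → ⋀^{p+1}_R(Rⁿ)` for `v = Σᵢ ∂ᵢ(f)·eᵢ`. -/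
def Kmap (n : ℕ) (f : MvPowerSeries (Fin n) ℂ) (p : ℕ) :
    (⋀[MvPowerSeries (Fin n) ℂ]^p (Fin n → MvPowerSeries (Fin n) ℂ)) →ₗ[MvPowerSeries (Fin n) ℂ]
      (⋀[MvPowerSeries (Fin n) ℂ]^(p + 1) (Fin n → MvPowerSeries (Fin n) ℂ)) where
  toFun ω := ⟨ExteriorAlgebra.ι (MvPowerSeries (Fin n) ℂ) (fun i => pd i f) *
      (ω : ExteriorAlgebra (MvPowerSeries (Fin n) ℂ) (Fin n → MvPowerSeries (Fin n) ℂ)), by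
    have h := Submodule.mul_mem_mul
      (LinearMap.mem_range_self
        (ExteriorAlgebra.ι (MvPowerSeries (Fin n) ℂ) (M := Fin n → MvPowerSeries (Fin n) ℂ))
        (fun i => pd i f)) ω.2
    rwa [← pow_succ'] at h⟩
  map_add' a b := Subtype.ext (by push_cast; exact mul_add _ _ _)
  map_smul' c a := Subtype.ext (by push_cast; exact mul_smul_comm c _ _)


section KoszulHelpers

open CliffordAlgebra

lemma mem_span_X_pow_iff {σ : Type*} [DecidableEq σ] (N : ℕ) (S : Finset σ)
    (g : MvPowerSeries σ ℂ) :
    g ∈ Ideal.span ((fun j => (MvPowerSeries.X j : MvPowerSeries σ ℂ) ^ N) '' (S : Set σ)) ↔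
      ∀ α : σ →₀ ℕ, (∀ j ∈ S, α j < N) → MvPowerSeries.coeff α g = 0 := by
  constructor
  · intro hg α hα
    induction hg using Submodule.span_induction generalizing α with
    | mem x hx =>
      obtain ⟨j, hj, rfl⟩ := hx
      exact MvPowerSeries.X_pow_dvd_iff.1 dvd_rfl α (hα j hj)
    | zero => simp
    | add x y _ _ hx hy => rw [map_add, hx α hα, hy α hα, add_zero]
    | smul r x _ hx =>
      rw [smul_eq_mul, MvPowerSeries.coeff_mul]
      refine Finset.sum_eq_zero fun q hq => ?_
      rw [hx q.2 fun j hj => lt_of_le_of_lt ?_ (hα j hj), mul_zero]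
      rw [← Finset.HasAntidiagonal.mem_antidiagonal.1 hq]
      simp
  · induction S using Finset.induction_on generalizing g with
    | empty =>
      intro h
      have : g = 0 := MvPowerSeries.ext fun α => by simpa using h α (by simp)
      simp [this]
    | insert s S hs ih =>
      intro h
      let g' : MvPowerSeries σ ℂ := fun α => if α s < N then MvPowerSeries.coeff α g else 0
      have hc : ∀ α, MvPowerSeries.coeff α g' =
        if α s < N then MvPowerSeries.coeff α g else 0 := fun α => rfl
      have h1 := ih g' (by
        intro α hα
        rw [hc]
        split_ifs with h'
        · refine h α ?_
          intro j hj
          rcases Finset.mem_insert.1 hj with rfl | hj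
          · exact h'
          · exact hα j hj
        · rfl)
      have h2 : (MvPowerSeries.X s : MvPowerSeries σ ℂ) ^ N ∣ g - g' := by
        rw [MvPowerSeries.X_pow_dvd_iff]
        intro α hα
        rw [map_sub, hc, if_pos hα, sub_self]
      have h3 : g = g' + (g - g') := by ring
      rw [h3]
      refine add_mem (Ideal.span_mono (Set.image_mono (by simp)) h1) ?_
      exact Ideal.mem_of_dvd _ h2 (Ideal.subset_span ⟨s, by simp, rfl⟩)

lemma X_pow_regular {σ : Type*} [DecidableEq σ] (N : ℕ) (S : Finset σ) (k : σ) (hk : k ∉ S)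
    (g : MvPowerSeries σ ℂ)
    (h : (MvPowerSeries.X k : MvPowerSeries σ ℂ) ^ N * g ∈
      Ideal.span ((fun j => (MvPowerSeries.X j : MvPowerSeries σ ℂ) ^ N) '' (S : Set σ))) :
    g ∈ Ideal.span ((fun j => (MvPowerSeries.X j : MvPowerSeries σ ℂ) ^ N) '' (S : Set σ)) := by
  rw [mem_span_X_pow_iff] at h ⊢
  intro α hα
  have := h (Finsupp.single k N + α) (by
    intro j hj
    have : k ≠ j := fun e => hk (e ▸ hj)
    simpa [Finsupp.single_apply, this] using hα j hj)
  rwa [MvPowerSeries.X_pow_eq, MvPowerSeries.coeff_add_monomial_mul, one_mul] at this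

lemma basis_mem_smul_top {R E ι : Type*} [CommRing R] [AddCommGroup E] [Module R E]
    (b : Module.Basis ι R E) (I : Ideal R) (x : E) :
    x ∈ I • (⊤ : Submodule R E) ↔ ∀ i, b.repr x i ∈ I := by
  constructor
  · intro hx i
    refine Submodule.smul_induction_on hx ?_ ?_
    · intro r hr y _
      simpa using I.mul_mem_right _ hr
    · intro x y hx hy
      simpa using add_mem hx hy
  · intro h
    rw [← b.linearCombination_repr x, Finsupp.linearCombination_apply]
    exact Submodule.sum_mem _ fun i _ => Submodule.smul_mem_smul (h i) trivial

variable {R M : Type*} [CommRing R] [AddCommGroup M] [Module R M]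

lemma contract_zero (d : Module.Dual R M) (x : ExteriorAlgebra R M) (hx : x ∈ ⋀[R]^0 M) :
    contractLeft (Q := (0 : QuadraticForm R M)) d x = 0 := by
  rw [ExteriorAlgebra.exteriorPower, pow_zero, Submodule.mem_one] at hx
  obtain ⟨r, rfl⟩ := hx
  exact contractLeft_algebraMap _ _ _

lemma contract_succ (d : Module.Dual R M) (p : ℕ) :
    ∀ x : ExteriorAlgebra R M, x ∈ ⋀[R]^(p + 1) M →
    contractLeft (Q := (0 : QuadraticForm R M)) d x ∈ ⋀[R]^p M := by
  induction p with
  | zero =>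
    intro x hx
    rw [ExteriorAlgebra.exteriorPower, zero_add, pow_one] at hx
    obtain ⟨r, rfl⟩ := hx
    rw [ExteriorAlgebra.exteriorPower, pow_zero, Submodule.mem_one]
    exact ⟨_, (contractLeft_ι _ _ _).symm⟩
  | succ p ih =>
    intro x hx
    rw [ExteriorAlgebra.exteriorPower, pow_succ'] at hx
    refine Submodule.mul_induction_on hx ?_ ?_
    · rintro _ ⟨a, rfl⟩ y hy
      have := contractLeft_ι_mul (Q := (0 : QuadraticForm R M)) d a y
      erw [this]
      refine sub_mem (Submodule.smul_mem _ _ hy) ?_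
      rw [ExteriorAlgebra.exteriorPower, pow_succ']
      exact Submodule.mul_mem_mul ⟨a, rfl⟩ (ih y hy)
    · intro x y hx hy
      rw [map_add]
      exact add_mem hx hy

lemma map_smul_top_mem {E : Type*} [AddCommGroup E] [Module R E] (φ : E →ₗ[R] E) (I : Ideal R)
    (x : E) (hx : x ∈ I • (⊤ : Submodule R E)) : φ x ∈ I • (⊤ : Submodule R E) := by
  have := Submodule.mem_map_of_mem (f := φ) hx
  rw [Submodule.map_smul''] at this
  exact Submodule.smul_mono le_rfl le_top this

/-- Key identity: `a ω ≡ v ∧ (c ⌟ ω)` modulo `I`, when `v ∧ ω ≡ 0` modulo `I`. -/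
lemma key_identity (v : M) (d : Module.Dual R M) (I : Ideal R) (ω : ExteriorAlgebra R M)
    (h : ExteriorAlgebra.ι R v * ω ∈ I • (⊤ : Submodule R (ExteriorAlgebra R M))) :
    d v • ω - ExteriorAlgebra.ι R v * (contractLeft (Q := (0 : QuadraticForm R M)) d ω :
      ExteriorAlgebra R M) ∈ I • (⊤ : Submodule R (ExteriorAlgebra R M)) := by
  have h1 := map_smul_top_mem (contractLeft (Q := (0 : QuadraticForm R M)) d) I _ h
  have h2 := contractLeft_ι_mul (Q := (0 : QuadraticForm R M)) d v ω
  exact h2 ▸ h1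

lemma koszul_aux {κ : Type*} (b : Module.Basis κ R (ExteriorAlgebra R M)) (v : M) (n : ℕ)
    (I : ℕ → Ideal R) (a : ℕ → R) (hI : ∀ k < n, I (k + 1) = I k ⊔ Ideal.span {a k})
    (hreg : ∀ k < n, ∀ g, a k * g ∈ I k → g ∈ I k)
    (hd : ∀ k < n, ∃ d : Module.Dual R M, d v = a k) (p : ℕ) :
    ∀ k, p + k < n → ∀ ω ∈ ⋀[R]^p M,
      ExteriorAlgebra.ι R v * ω ∈ I k • (⊤ : Submodule R (ExteriorAlgebra R M)) →
      (p = 0 → ω ∈ I k • (⊤ : Submodule R (ExteriorAlgebra R M))) ∧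
      ∃ ζ, ω - ExteriorAlgebra.ι R v * ζ ∈ I k • (⊤ : Submodule R (ExteriorAlgebra R M)) := by
  have reg : ∀ k < n, ∀ x : ExteriorAlgebra R M,
      a k • x ∈ I k • (⊤ : Submodule R (ExteriorAlgebra R M)) →
      x ∈ I k • (⊤ : Submodule R (ExteriorAlgebra R M)) := by
    intro k hk x hx
    rw [basis_mem_smul_top b] at hx ⊢
    intro i
    exact hreg k hk _ (by simpa using hx i)
  induction p with
  | zero =>
    intro k hk ω hω h
    obtain ⟨d, hdv⟩ := hd k (by omega)
    have h1 := key_identity v d (I k) ω h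
    rw [contract_zero d ω hω, mul_zero, sub_zero, hdv] at h1
    have h2 := reg k (by omega) _ h1
    exact ⟨fun _ => h2, 0, by simpa using h2⟩
  | succ p ih =>
    intro k hk ω hω h
    refine ⟨by simp, ?_⟩
    obtain ⟨d, hdv⟩ := hd k (by omega)
    have h1 := key_identity v d (I k) ω h
    have hη := contract_succ d p ω hω
    set η : ExteriorAlgebra R M := contractLeft (Q := (0 : QuadraticForm R M)) d ω
    rw [hdv] at h1
    have hle : I k ≤ I (k + 1) := by rw [hI k (by omega)]; exact le_sup_left
    have ha : a k ∈ I (k + 1) := by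
      rw [hI k (by omega)]
      exact Ideal.mem_sup_right (Ideal.mem_span_singleton_self _)
    have h2 : ExteriorAlgebra.ι R v * η ∈
        I (k + 1) • (⊤ : Submodule R (ExteriorAlgebra R M)) := by
      have e : ExteriorAlgebra.ι R v * η = a k • ω - (a k • ω - ExteriorAlgebra.ι R v * η) := by
        abel
      rw [e]
      exact sub_mem (Submodule.smul_mem_smul ha trivial) (Submodule.smul_mono hle le_rfl h1)
    obtain ⟨-, ξ, hξ⟩ := ih (k + 1) (by omega) η hη h2
    rw [hI k (by omega), Submodule.sup_smul, Submodule.mem_sup] at hξ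
    obtain ⟨y, hy, z, hz, hyz⟩ := hξ
    rw [Submodule.ideal_span_singleton_smul] at hz
    obtain ⟨ζ, -, rfl⟩ := (Submodule.mem_smul_pointwise_iff_exists _ _ _).1 hz
    refine ⟨ζ, reg k (by omega) _ ?_⟩
    have hy' := map_smul_top_mem (LinearMap.mulLeft R (ExteriorAlgebra.ι R v)) _ _ hy
    rw [LinearMap.mulLeft_apply] at hy'
    have e1 : ExteriorAlgebra.ι R v * η =
        ExteriorAlgebra.ι R v * y + a k • (ExteriorAlgebra.ι R v * ζ) := by
      have : η = y + a k • ζ + ExteriorAlgebra.ι R v * ξ := by rw [hyz]; abel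
      rw [this, mul_add, mul_add, ← mul_assoc, ExteriorAlgebra.ι_sq_zero, zero_mul, add_zero,
        mul_smul_comm]
    have e2 : a k • (ω - ExteriorAlgebra.ι R v * ζ) =
        (a k • ω - ExteriorAlgebra.ι R v * η) + ExteriorAlgebra.ι R v * y := by
      rw [e1, smul_sub]; abel
    rw [e2]
    exact add_mem h1 hy'

lemma homog_preimage (v : M) (p : ℕ) (ω : ExteriorAlgebra R M) (hω : ω ∈ ⋀[R]^(p + 1) M)
    (ζ : ExteriorAlgebra R M) (h : ω = ExteriorAlgebra.ι R v * ζ) :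
    ∃ ζ' ∈ ⋀[R]^p M, ω = ExteriorAlgebra.ι R v * ζ' := by
  have hv : ExteriorAlgebra.ι R v ∈ ⋀[R]^1 M := by
    rw [ExteriorAlgebra.exteriorPower, pow_one]; exact ⟨v, rfl⟩
  refine ⟨(DirectSum.decompose (fun i : ℕ => ⋀[R]^i M) ζ p : ExteriorAlgebra R M),
    SetLike.coe_mem _, ?_⟩
  have h1 := DirectSum.coe_decompose_mul_add_of_left_mem (fun i : ℕ => ⋀[R]^i M) (j := p) (b := ζ)
    hv
  rw [← h1, ← h, add_comm 1 p]
  exact (DirectSum.decompose_of_mem_same (fun i : ℕ => ⋀[R]^i M) hω).symm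

end KoszulHelpers

/-- **Formal De Rham Lemma (Koszul exactness)**: for `f` with an isolated singularity,
the Koszul complex `0 → ⋀^0 → ⋀^1 → ⋯ → ⋀^n` of `v = Σᵢ ∂ᵢ(f)·eᵢ` is exact:
`v ∧ − : ⋀^0 → ⋀^1` is injective and for `1 ≤ p ≤ n−1` the kernel of
`v ∧ − : ⋀^p → ⋀^{p+1}` is the image of `v ∧ − : ⋀^{p-1} → ⋀^p`. -/
theorem formal_de_rham_lemma (n : ℕ) (hn : 1 ≤ n) (f : MvPowerSeries (Fin n) ℂ)
    (hf0 : MvPowerSeries.constantCoeff f = 0)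
    (m : ℕ) (hm : 1 ≤ m) (hiso : mx n ^ m ≤ Jf n f) :
    Function.Injective (Kmap n f 0) ∧
    ∀ p : ℕ, 1 ≤ p + 1 → p + 1 ≤ n - 1 →
      LinearMap.ker (Kmap n f (p + 1)) = LinearMap.range (Kmap n f p) := by
  classical
  let R := MvPowerSeries (Fin n) ℂ
  let v : Fin n → R := fun i => pd i f
  let S : ℕ → Finset (Fin n) := fun k => Finset.univ.filter fun j => j.val < k
  let I : ℕ → Ideal R := fun k =>
    Ideal.span ((fun j => (MvPowerSeries.X j : R) ^ m) '' (S k : Set (Fin n)))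
  let a : ℕ → R := fun k => if h : k < n then (MvPowerSeries.X ⟨k, h⟩ : R) ^ m else 0
  have hI0 : I 0 = ⊥ := by simp [I, S]
  have main := fun p => koszul_aux (Pi.basisFun R (Fin n)).ExteriorAlgebra v n I a ?_ ?_ ?_ p
  · constructor
    · rw [injective_iff_map_eq_zero]
      intro ω hω
      have h := (main 0 0 (by omega) ω ω.2 (by
        have := congrArg Subtype.val hω
        change ExteriorAlgebra.ι R v * (ω : ExteriorAlgebra R (Fin n → R)) = 0 at this
        rw [this]; exact zero_mem _)).1 rfl
      rw [hI0, Submodule.bot_smul, Submodule.mem_bot] at h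
      exact Subtype.ext h
    · intro p _ hp
      ext ω
      rw [LinearMap.mem_ker, LinearMap.mem_range]
      constructor
      · intro hω
        obtain ⟨-, ζ, hζ⟩ := main (p + 1) 0 (by omega) ω ω.2 (by
          have := congrArg Subtype.val hω
          change ExteriorAlgebra.ι R v * (ω : ExteriorAlgebra R (Fin n → R)) = 0 at this
          rw [this]; exact zero_mem _)
        rw [hI0, Submodule.bot_smul, Submodule.mem_bot, sub_eq_zero] at hζ
        obtain ⟨ζ', h', e⟩ := homog_preimage v p ω ω.2 ζ hζ
        exact ⟨⟨ζ', h'⟩, Subtype.ext e.symm⟩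
      · rintro ⟨ζ, rfl⟩
        refine Subtype.ext ?_
        change ExteriorAlgebra.ι R v * (ExteriorAlgebra.ι R v * (ζ : ExteriorAlgebra R _)) = 0
        rw [← mul_assoc, ExteriorAlgebra.ι_sq_zero, zero_mul]
  · intro k hk
    have hS : S (k + 1) = insert ⟨k, hk⟩ (S k) := by
      ext j
      simp only [S, Finset.mem_filter, Finset.mem_univ, true_and, Finset.mem_insert, Fin.ext_iff]
      omega
    simp only [I, a, hS, dif_pos hk, Finset.coe_insert, Set.image_insert_eq]
    rw [Ideal.span_insert, sup_comm]
  · intro k hk g hg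
    simp only [a, dif_pos hk] at hg
    exact X_pow_regular m (S k) ⟨k, hk⟩ (by simp [S]) g hg
  · intro k hk
    have h0 : (MvPowerSeries.X ⟨k, hk⟩ : R) ∈ mx n := Ideal.subset_span ⟨_, rfl⟩
    have h1 : (MvPowerSeries.X ⟨k, hk⟩ : R) ^ m ∈ Jf n f := hiso (Ideal.pow_mem_pow h0 m)
    obtain ⟨c, hc⟩ := (Ideal.mem_span_range_iff_exists_fun).1 h1
    refine ⟨∑ i, c i • LinearMap.proj i, ?_⟩
    simp only [a, dif_pos hk, ← hc]
    simp [v]
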